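/- Let H be a Berge-K4-saturated 3-uniform hypergraph on n ≥ 7 vertices with the minimum number of hyperedges (so in particular e(H) ≤ n). Then H has no isolated vertex, i.e., every vertex has degree at least 1. -/

import Mathlib

variable {V : Type*} [DecidableEq V]

/-- A Berge-K4 in the hyperedge set `E` with core vertices `a,b,c,d`:
four distinct vertices together with six distinct hyperedges, one assigned
to each pair of core vertices, each containing its assigned pair. -/
def IsBergeK4Core (E : Finset (Finset V)) (a b c d : V) : Prop :=
  a ≠ b ∧ a ≠ c ∧ a ≠ d ∧ b ≠ c ∧ b ≠ d ∧ c ≠ d ∧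
  ∃ fab fac fad fbc fbd fcd : Finset V,
    fab ∈ E ∧ fac ∈ E ∧ fad ∈ E ∧ fbc ∈ E ∧ fbd ∈ E ∧ fcd ∈ E ∧
    ([fab, fac, fad, fbc, fbd, fcd] : List (Finset V)).Nodup ∧
    a ∈ fab ∧ b ∈ fab ∧ a ∈ fac ∧ c ∈ fac ∧ a ∈ fad ∧ d ∈ fad ∧
    b ∈ fbc ∧ c ∈ fbc ∧ b ∈ fbd ∧ d ∈ fbd ∧ c ∈ fcd ∧ d ∈ fcd

/-- `E` contains a Berge-K4. -/
def IsBergeK4 (E : Finset (Finset V)) : Prop :=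
  ∃ a b c d : V, IsBergeK4Core E a b c d

/-- Every hyperedge has exactly 3 vertices. -/
def Is3Uniform (E : Finset (Finset V)) : Prop := ∀ e ∈ E, e.card = 3

/-- The degree of a vertex: the number of hyperedges containing it. -/
def hdeg (E : Finset (Finset V)) (v : V) : ℕ := (E.filter fun e => v ∈ e).card

/-- A 3-uniform Berge-K4-saturated hypergraph on the (finite) vertex type `V`:
it is 3-uniform, Berge-K4-free, and adding any non-hyperedge (3-element subset
of the vertices not already a hyperedge) creates a Berge-K4. -/
def IsSaturated [Fintype V] (E : Finset (Finset V)) : Prop :=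
  Is3Uniform E ∧ ¬ IsBergeK4 E ∧
    ∀ e : Finset V, e.card = 3 → e ∉ E → IsBergeK4 (insert e E)

/-- The pair `(u,v)` is good: there are two further vertices `x,y` (so that
`u,v,x,y` are four distinct vertices) and five distinct hyperedges, one for
each pair among `u,v,x,y` other than `uv`, each containing its assigned pair;
i.e. adding an edge on `{u,v}` completes a Berge-K4 with core `{u,v,x,y}`. -/
def GoodPair (E : Finset (Finset V)) (u v : V) : Prop :=
  ∃ x y : V, u ≠ v ∧ u ≠ x ∧ u ≠ y ∧ v ≠ x ∧ v ≠ y ∧ x ≠ y ∧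
  ∃ eux euy evx evy exy : Finset V,
    eux ∈ E ∧ euy ∈ E ∧ evx ∈ E ∧ evy ∈ E ∧ exy ∈ E ∧
    ([eux, euy, evx, evy, exy] : List (Finset V)).Nodup ∧
    u ∈ eux ∧ x ∈ eux ∧ u ∈ euy ∧ y ∈ euy ∧
    v ∈ evx ∧ x ∈ evx ∧ v ∈ evy ∧ y ∈ evy ∧
    x ∈ exy ∧ y ∈ exy

/-!
If a vertex is isolated, saturation makes every pair of the other vertices good. So it suffices to
show that a Berge-`K₄`-free family in which all pairs of a set `U` of at least six vertices are good
has at least `|U| + 2` hyperedges. If it had fewer, some vertex `u` would have degree at most three.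
The good pairs around `u` then force its hyperedges into a set `S` of five vertices carrying five
hyperedges, a Möbius band, and every further hyperedge meets `S` in at most one vertex. Each vertex
outside `S` has degree at least three and lies in at least two hyperedges meeting `S`, since it is
good with `u`; counting incidences leaves only the case where `U \ S` is itself a hyperedge, and
such a hyperedge would have to meet another one in a single vertex.

That a minimum saturated family has at most `n` hyperedges follows by induction in steps of two:
fix a good pair `x, y`, the hub, forming a Berge triangle with every other vertex, and attach two
new vertices `p, q` through the hyperedges `{x, p, q}` and `{y, p, q}`.
-/

section Diamond

variable {α : Type*} {E F : Finset (Finset α)} {p q x y : α}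

/-- A Berge copy of `K₄` minus the edge `pq`, with core `p, q, x, y`: the field `px` is the
hyperedge assigned to the pair `{p, x}`, and so on. It is the data witnessing `GoodPair E p q`. -/
structure BergeDiamond (E : Finset (Finset α)) (p q x y : α) where
  (px py qx qy xy : Finset α)
  core_nodup : [p, q, x, y].Nodup
  edges_nodup : [px, py, qx, qy, xy].Nodup
  edges_mem : ∀ f ∈ [px, py, qx, qy, xy], f ∈ E
  mem_px : p ∈ px ∧ x ∈ px
  mem_py : p ∈ py ∧ y ∈ py
  mem_qx : q ∈ qx ∧ x ∈ qx
  mem_qy : q ∈ qy ∧ y ∈ qy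
  mem_xy : x ∈ xy ∧ y ∈ xy

namespace BergeDiamond

/-- Exchange of the two ends of the missing pair. -/
def symm (D : BergeDiamond E p q x y) : BergeDiamond E q p x y :=
  ⟨D.qx, D.qy, D.px, D.py, D.xy, by grind [D.core_nodup], by grind [D.edges_nodup],
    by grind [D.edges_mem], D.mem_qx, D.mem_qy, D.mem_px, D.mem_py, D.mem_xy⟩

/-- Exchange of the two core vertices outside the missing pair. -/
def swap (D : BergeDiamond E p q x y) : BergeDiamond E p q y x :=
  ⟨D.py, D.px, D.qy, D.qx, D.xy, by grind [D.core_nodup], by grind [D.edges_nodup],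
    by grind [D.edges_mem], D.mem_py, D.mem_px, D.mem_qy, D.mem_qx, D.mem_xy.symm⟩

/-- A Berge diamond remains one in any larger family. -/
def mono (D : BergeDiamond E p q x y) (h : E ⊆ F) : BergeDiamond F p q x y where
  __ := D
  edges_mem f hf := h (D.edges_mem f hf)

theorem px_mem (D : BergeDiamond E p q x y) : D.px ∈ E := D.edges_mem _ (by simp)

theorem qx_mem (D : BergeDiamond E p q x y) : D.qx ∈ E := D.symm.px_mem

theorem py_mem (D : BergeDiamond E p q x y) : D.py ∈ E := D.swap.px_mem

theorem qy_mem (D : BergeDiamond E p q x y) : D.qy ∈ E := D.swap.qx_mem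

theorem xy_mem (D : BergeDiamond E p q x y) : D.xy ∈ E := D.edges_mem _ (by simp)

theorem goodPair (D : BergeDiamond E p q x y) : GoodPair E p q := by
  obtain ⟨px, py, qx, qy, xy, hcore, hnodup, hmem, hpx, hpy, hqx, hqy, hxy⟩ := D
  refine ⟨x, y, ?_, ?_, ?_, ?_, ?_, ?_, px, py, qx, qy, xy, ?_⟩ <;> grind

theorem isBergeK4 (D : BergeDiamond E p q x y) {e : Finset α} (he : e ∈ E) (hp : p ∈ e)
    (hq : q ∈ e) (hne : e ∉ [D.px, D.py, D.qx, D.qy, D.xy]) : IsBergeK4 E := by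
  obtain ⟨px, py, qx, qy, xy, hcore, hnodup, hmem, hpx, hpy, hqx, hqy, hxy⟩ := D
  refine ⟨p, q, x, y, ?_, ?_, ?_, ?_, ?_, ?_, e, px, py, qx, qy, xy, ?_⟩ <;> grind

theorem eq_of_mem (D : BergeDiamond E p q x y) (h3 : Is3Uniform E) (hfree : ¬IsBergeK4 E)
    {e : Finset α} (he : e ∈ E) (hp : p ∈ e) (hq : q ∈ e) :
    e = D.px ∨ e = D.py ∨ e = D.qx ∨ e = D.qy := by
  classical
  have hcore : ({p, q, x, y} : Finset α).card = 4 := by grind [D.core_nodup]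
  have hne : e ≠ D.xy := by
    rintro rfl
    have hsub : {p, q, x, y} ⊆ D.xy := by grind [D.mem_xy]
    grind [Finset.card_le_card hsub, h3 _ he]
  by_contra! h
  exact hfree (D.isBergeK4 he hp hq (by grind))

end BergeDiamond

namespace GoodPair

theorem exists_bergeDiamond (h : GoodPair E p q) : ∃ x y, Nonempty (BergeDiamond E p q x y) := by
  obtain ⟨x, y, hpq, hpx, hpy, hqx, hqy, hxy, px, py, qx, qy, xy, h⟩ := h
  refine ⟨x, y, ⟨px, py, qx, qy, xy, ?_, ?_, ?_, ?_, ?_, ?_, ?_, ?_⟩⟩ <;> grind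

theorem symm (h : GoodPair E p q) : GoodPair E q p :=
  let ⟨_, _, ⟨D⟩⟩ := h.exists_bergeDiamond
  D.symm.goodPair

theorem mono (h : GoodPair E p q) (hEF : E ⊆ F) : GoodPair F p q :=
  let ⟨_, _, ⟨D⟩⟩ := h.exists_bergeDiamond
  (D.mono hEF).goodPair

theorem isBergeK4_insert [DecidableEq α] (h : GoodPair E p q) {e : Finset α} (he : e ∉ E)
    (hp : p ∈ e) (hq : q ∈ e) : IsBergeK4 (insert e E) := by
  obtain ⟨x, y, ⟨D⟩⟩ := h.exists_bergeDiamond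
  refine (D.mono (Finset.subset_insert e E)).isBergeK4 (Finset.mem_insert_self e E) hp hq ?_
  exact fun h => he (D.edges_mem e h)

end GoodPair

/-- If adding `e` completes a Berge `K₄`, then `e` plays the role of one of its six hyperedges, and
the pair to which it is assigned was already good. -/
theorem exists_goodPair_of_isBergeK4_insert [DecidableEq α] {e : Finset α} (hE : ¬IsBergeK4 E)
    (h : IsBergeK4 (insert e E)) : ∃ p ∈ e, ∃ q ∈ e, GoodPair E p q := by
  obtain ⟨a, b, c, d, hab, hac, had, hbc, hbd, hcd, ab, ac, ad, bc, bd, cd, h⟩ := h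
  by_cases h_ab : ab = e
  · exact ⟨a, by grind, b, by grind, c, d, by grind, by grind, by grind, by grind, by grind,
      by grind, ac, ad, bc, bd, cd, by grind⟩
  by_cases h_ac : ac = e
  · refine ⟨a, ?_, c, ?_, b, d, ?_, ?_, ?_, ?_, ?_, ?_, ab, ad, bc, cd, bd, ?_⟩ <;> grind
  by_cases h_ad : ad = e
  · refine ⟨a, ?_, d, ?_, b, c, ?_, ?_, ?_, ?_, ?_, ?_, ab, ac, bd, cd, bc, ?_⟩ <;> grind
  by_cases h_bc : bc = e
  · refine ⟨b, ?_, c, ?_, a, d, ?_, ?_, ?_, ?_, ?_, ?_, ab, bd, ac, cd, ad, ?_⟩ <;> grind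
  by_cases h_bd : bd = e
  · refine ⟨b, ?_, d, ?_, a, c, ?_, ?_, ?_, ?_, ?_, ?_, ab, bc, ad, cd, ac, ?_⟩ <;> grind
  by_cases h_cd : cd = e
  · refine ⟨c, ?_, d, ?_, a, b, ?_, ?_, ?_, ?_, ?_, ?_, ac, bc, ad, bd, ab, ?_⟩ <;> grind
  exact absurd ⟨a, b, c, d, hab, hac, had, hbc, hbd, hcd, ab, ac, ad, bc, bd, cd, by grind⟩ hE

end Diamond

section Degree

variable {E : Finset (Finset V)}

theorem three_le_hdeg {f g h : Finset V} {v : V} (hf : f ∈ E) (hg : g ∈ E) (hh : h ∈ E)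
    (hnodup : [f, g, h].Nodup) (hvf : v ∈ f) (hvg : v ∈ g) (hvh : v ∈ h) : 3 ≤ hdeg E v :=
  Finset.two_lt_card.2 ⟨f, by grind, g, by grind, h, by grind⟩

theorem BergeDiamond.three_le_hdeg {p q x y : V} (D : BergeDiamond E p q x y) : 3 ≤ hdeg E x :=
  _root_.three_le_hdeg D.px_mem D.qx_mem D.xy_mem (by grind [D.edges_nodup]) D.mem_px.2 D.mem_qx.2
    D.mem_xy.1

end Degree

section IsTriangle

/-- The vertices `a`, `b`, `c` are distinct and form a hyperedge of `E`. -/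
def IsTriangle (E : Finset (Finset V)) (a b c : V) : Prop :=
  a ≠ b ∧ a ≠ c ∧ b ≠ c ∧ {a, b, c} ∈ E

variable {E : Finset (Finset V)} {a b c : V}

namespace IsTriangle

theorem mem (h : IsTriangle E a b c) : {a, b, c} ∈ E := h.2.2.2

theorem swap (h : IsTriangle E a b c) : IsTriangle E b a c := by
  obtain ⟨hab, hac, hbc, h⟩ := h
  exact ⟨hab.symm, hbc, hac, by rwa [Finset.insert_comm]⟩

theorem rotate (h : IsTriangle E a b c) : IsTriangle E b c a := by
  obtain ⟨hab, hac, hbc, h⟩ := h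
  refine ⟨hbc, hab.symm, hac.symm, ?_⟩
  rwa [Finset.pair_comm, Finset.insert_comm]

theorem swap_right (h : IsTriangle E a b c) : IsTriangle E a c b := h.rotate.rotate.swap

end IsTriangle

theorem exists_eq_triple_of_card_eq_three {s : Finset V} (hs : s.card = 3) (ha : a ∈ s)
    (hb : b ∈ s) (hab : a ≠ b) : ∃ c, a ≠ c ∧ b ≠ c ∧ s = {a, b, c} := by
  obtain ⟨c, hc⟩ : (s \ {a, b}).Nonempty := by
    rw [← Finset.card_pos, Finset.card_sdiff_of_subset (by grind)]
    grind
  exact ⟨c, by grind, by grind, (Finset.eq_of_subset_of_card_le (by grind) (by grind)).symm⟩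

theorem Is3Uniform.exists_isTriangle (h3 : Is3Uniform E) {e : Finset V} (he : e ∈ E) (ha : a ∈ e)
    (hb : b ∈ e) (hab : a ≠ b) : ∃ c, e = {a, b, c} ∧ IsTriangle E a b c := by
  obtain ⟨c, hac, hbc, rfl⟩ := exists_eq_triple_of_card_eq_three (h3 e he) ha hb hab
  exact ⟨c, rfl, hab, hac, hbc, he⟩

theorem BergeDiamond.eq_or_eq_of_isTriangle {p q x y : V} (D : BergeDiamond E p q x y)
    (h3 : Is3Uniform E) (hfree : ¬IsBergeK4 E) (h : IsTriangle E p q c) : c = x ∨ c = y := by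
  have := D.eq_of_mem h3 hfree h.mem (by simp) (by simp)
  grind [D.core_nodup, D.mem_px, D.mem_py, D.mem_qx, D.mem_qy]

theorem BergeDiamond.card_filter_mem_le_two {p q x y : V} (D : BergeDiamond E p q x y)
    (h3 : Is3Uniform E) (hfree : ¬IsBergeK4 E) : {e ∈ E | p ∈ e ∧ q ∈ e}.card ≤ 2 := by
  have hsub : {e ∈ E | p ∈ e ∧ q ∈ e} ⊆ {{p, q, x}, {p, q, y}} := by
    intro e he
    obtain ⟨he, hp, hq⟩ := Finset.mem_filter.1 he
    obtain ⟨c, rfl, hc⟩ := h3.exists_isTriangle he hp hq (by grind [D.core_nodup])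
    have := D.eq_or_eq_of_isTriangle h3 hfree hc
    grind
  exact (Finset.card_le_card hsub).trans Finset.card_le_two

/-- A hyperedge `{p, x, c}` could replace `D.px`, freeing `{p, q, x}` for the missing pair. -/
theorem BergeDiamond.eq_or_eq_of_px_eq {p q x y : V} (D : BergeDiamond E p q x y)
    (hfree : ¬IsBergeK4 E) (hD : D.px = {p, q, x}) (hc : IsTriangle E p x c) :
    c = q ∨ c = y := by
  by_contra! hne
  obtain ⟨hpx, hnodup⟩ := List.nodup_cons.1 D.edges_nodup
  have hqy : ∀ f ∈ [D.py, D.qx, D.qy, D.xy], q ∈ f ∨ y ∈ f := by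
    grind [D.mem_py, D.mem_qx, D.mem_qy, D.mem_xy]
  have hq : q ∉ ({p, x, c} : Finset V) := by grind [D.core_nodup]
  have hy : y ∉ ({p, x, c} : Finset V) := by grind [D.core_nodup]
  let D' : BergeDiamond E p q x y :=
    { D with
      px := {p, x, c}
      edges_nodup := List.nodup_cons.2 ⟨fun h => (hqy _ h).elim hq hy, hnodup⟩
      edges_mem := by grind [D.edges_mem, hc.mem]
      mem_px := by simp }
  refine hfree (D'.isBergeK4 D.px_mem D.mem_px.1 (by simp [hD]) ?_)
  exact List.not_mem_cons_of_ne_of_not_mem (by grind) hpx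

end IsTriangle

section IsLocallyGood

/-- A Berge-`K₄`-free `3`-uniform hypergraph in which any two vertices of a common hyperedge form a
good pair. -/
structure IsLocallyGood (E : Finset (Finset V)) : Prop where
  uniform : Is3Uniform E
  free : ¬IsBergeK4 E
  good : ∀ e ∈ E, ∀ p ∈ e, ∀ q ∈ e, p ≠ q → GoodPair E p q

namespace IsLocallyGood

variable {E : Finset (Finset V)} {p q a b c : V} (hE : IsLocallyGood E)
include hE

theorem exists_bergeDiamond (h : IsTriangle E p q a) :
    ∃ y, ∃ D : BergeDiamond E p q a y, D.px = {p, q, a} ∨ D.qx = {p, q, a} := by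
  obtain ⟨x, y, ⟨D⟩⟩ :=
    (hE.good _ h.mem p (by simp) q (by simp) h.1).exists_bergeDiamond
  have hcore := D.core_nodup
  obtain hx | hy | hx | hy := D.eq_of_mem hE.uniform hE.free h.mem (by simp) (by simp)
  · obtain rfl : x = a := by grind [D.mem_px]
    exact ⟨y, D, .inl hx.symm⟩
  · obtain rfl : y = a := by grind [D.mem_py]
    exact ⟨x, D.swap, .inl hy.symm⟩
  · obtain rfl : x = a := by grind [D.mem_qx]
    exact ⟨y, D, .inr hx.symm⟩
  · obtain rfl : y = a := by grind [D.mem_qy]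
    exact ⟨x, D.swap, .inr hy.symm⟩

theorem three_le_hdeg {e : Finset V} {v : V} (he : e ∈ E) (hv : v ∈ e) : 3 ≤ hdeg E v := by
  obtain ⟨p, hp, hpv⟩ := Finset.exists_mem_ne (s := e) (by grind [hE.uniform e he]) v
  obtain ⟨q, -, h⟩ := hE.uniform.exists_isTriangle he hv hp hpv.symm
  obtain ⟨y, D, -⟩ := hE.exists_bergeDiamond h.rotate
  exact D.three_le_hdeg

theorem exists_isTriangle_ne (h : IsTriangle E p q a) :
    (∃ d, d ≠ q ∧ IsTriangle E p a d) ∨ ∃ d, d ≠ p ∧ IsTriangle E q a d := by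
  obtain ⟨y, D, hD | hD⟩ := hE.exists_bergeDiamond h
  · obtain ⟨d, hd, h'⟩ := hE.uniform.exists_isTriangle D.qx_mem D.mem_qx.1 D.mem_qx.2 h.2.2.1
    exact .inr ⟨d, by grind [D.edges_nodup], h'⟩
  · obtain ⟨d, hd, h'⟩ := hE.uniform.exists_isTriangle D.px_mem D.mem_px.1 D.mem_px.2 h.2.1
    exact .inl ⟨d, by grind [D.edges_nodup], h'⟩

theorem card_filter_mem_le_two (hpq : p ≠ q) : {e ∈ E | p ∈ e ∧ q ∈ e}.card ≤ 2 := by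
  obtain h | ⟨e, he⟩ := {e ∈ E | p ∈ e ∧ q ∈ e}.eq_empty_or_nonempty
  · simp [h]
  · obtain ⟨he, hp, hq⟩ := Finset.mem_filter.1 he
    obtain ⟨x, y, ⟨D⟩⟩ := (hE.good e he p hp q hq hpq).exists_bergeDiamond
    exact D.card_filter_mem_le_two hE.uniform hE.free

theorem exists_bergeDiamond_of_two (ha : IsTriangle E p q a) (hb : IsTriangle E p q b)
    (hab : a ≠ b) : ∃ D : BergeDiamond E p q a b, D.px = {p, q, a} ∨ D.qx = {p, q, a} := by
  obtain ⟨y, D, hD⟩ := hE.exists_bergeDiamond ha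
  obtain rfl : b = y :=
    (D.eq_or_eq_of_isTriangle hE.uniform hE.free hb).resolve_left hab.symm
  exact ⟨D, hD⟩

theorem eq_or_eq (ha : IsTriangle E p q a) (hb : IsTriangle E p q b) (hab : a ≠ b)
    (hc : IsTriangle E p q c) : c = a ∨ c = b := by
  obtain ⟨D, -⟩ := hE.exists_bergeDiamond_of_two ha hb hab
  exact D.eq_or_eq_of_isTriangle hE.uniform hE.free hc

theorem exists_isTriangle_opposite (ha : IsTriangle E p q a) (hb : IsTriangle E p q b)
    (hab : a ≠ b) : ∃ c, IsTriangle E a b c := by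
  obtain ⟨D, -⟩ := hE.exists_bergeDiamond_of_two ha hb hab
  obtain ⟨c, -, hc⟩ := hE.uniform.exists_isTriangle D.xy_mem D.mem_xy.1 D.mem_xy.2 hab
  exact ⟨c, hc⟩

theorem forall_eq_or_eq (ha : IsTriangle E p q a) (hb : IsTriangle E p q b) (hab : a ≠ b) :
    (∀ c, IsTriangle E p a c → c = q ∨ c = b) ∨ ∀ c, IsTriangle E q a c → c = p ∨ c = b := by
  obtain ⟨D, hD | hD⟩ := hE.exists_bergeDiamond_of_two ha hb hab
  · exact .inl fun c => D.eq_or_eq_of_px_eq hE.free hD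
  · exact .inr fun c => D.symm.eq_or_eq_of_px_eq hE.free (hD.trans (Finset.insert_comm _ _ _))

theorem eq_or_eq_opposite (ha : IsTriangle E p q a) (hb : IsTriangle E p q b)
    (hab : IsTriangle E p a b) (hc : IsTriangle E q a c) : c = p ∨ c = b := by
  by_contra! hne
  obtain h | h := hE.forall_eq_or_eq ha.rotate hc hne.1.symm
  · grind [h b hb.swap, hab.2.2.1]
  · grind [h b hab.swap, hb.2.2.1]

/-- Otherwise every hyperedge with two vertices in `K = {p, q, a, b}` lies in `K`, but the good pair
`(p, q)` needs five such hyperedges. -/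
theorem not_isTriangle_of_two (ha : IsTriangle E p q a) (hb : IsTriangle E p q b) :
    ¬IsTriangle E p a b := by
  intro hab
  have haq : IsTriangle E p a q := ha.swap_right
  have hbq : IsTriangle E p b q := hb.swap_right
  have hba : IsTriangle E p b a := hab.swap_right
  set K : Finset V := {p, q, a, b}
  obtain ⟨D, -⟩ := hE.exists_bergeDiamond_of_two ha hb hab.2.2.1
  have mem_powersetCard {e : Finset V} {s t : V} (he : e ∈ E) (hst : s ∈ e ∧ t ∈ e)
      (hne : s ≠ t) (hs : s ∈ K) (ht : t ∈ K) (h : ∀ r, IsTriangle E s t r → r ∈ K) :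
      e ∈ K.powersetCard 3 := by
    obtain ⟨r, rfl, hr⟩ := hE.uniform.exists_isTriangle he hst.1 hst.2 hne
    refine Finset.mem_powersetCard.2 ⟨?_, hE.uniform _ he⟩
    simpa only [Finset.insert_subset_iff, Finset.singleton_subset_iff] using ⟨hs, ht, h r hr⟩
  have hsub : [D.px, D.py, D.qx, D.qy, D.xy].toFinset ⊆ K.powersetCard 3 := by
    have hpx := mem_powersetCard D.px_mem D.mem_px ha.2.1 (by simp [K]) (by simp [K])
      fun r hr => by grind [hE.eq_or_eq haq hab hb.2.2.1 hr]
    have hpy := mem_powersetCard D.py_mem D.mem_py hb.2.1 (by simp [K]) (by simp [K])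
      fun r hr => by grind [hE.eq_or_eq hbq hba ha.2.2.1 hr]
    have hqx := mem_powersetCard D.qx_mem D.mem_qx ha.2.2.1 (by simp [K]) (by simp [K])
      fun r hr => by grind [hE.eq_or_eq_opposite ha hb hab hr]
    have hqy := mem_powersetCard D.qy_mem D.mem_qy hb.2.2.1 (by simp [K]) (by simp [K])
      fun r hr => by grind [hE.eq_or_eq_opposite hb ha hba hr]
    have hxy := mem_powersetCard D.xy_mem D.mem_xy hab.2.2.1 (by simp [K]) (by simp [K])
      fun r hr => by grind [hE.eq_or_eq_opposite hab haq hbq hr]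
    simp [List.toFinset_cons, Finset.insert_subset_iff, hpx, hpy, hqx, hqy, hxy]
  have hle := Finset.card_le_card hsub
  have hcard : K.card = 4 := by grind [D.core_nodup]
  rw [List.toFinset_card_of_nodup D.edges_nodup, Finset.card_powersetCard, hcard] at hle
  exact absurd hle (by simp [Nat.choose])

theorem forall_eq_or_forall_eq (ha : IsTriangle E p q a) (hb : IsTriangle E p q b)
    (hab : a ≠ b) :
    (∀ c, IsTriangle E p a c → c = q) ∨ ∀ c, IsTriangle E q a c → c = p := by
  refine (hE.forall_eq_or_eq ha hb hab).imp (fun h c hc => ?_) fun h c hc => ?_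
  · exact (h c hc).resolve_right fun hcb => hE.not_isTriangle_of_two ha hb (hcb ▸ hc)
  · exact (h c hc).resolve_right fun hcb =>
      hE.not_isTriangle_of_two ha.swap hb.swap (hcb ▸ hc)

theorem exists_boundary (h : IsTriangle E a b c) :
    (∀ d, IsTriangle E a b d → d = c) ∨ (∀ d, IsTriangle E a c d → d = b) ∨
      ∀ d, IsTriangle E b c d → d = a := by
  by_cases hab : ∀ d, IsTriangle E a b d → d = c
  · exact .inl hab
  · push Not at hab
    obtain ⟨d, hd, hdc⟩ := hab
    exact .inr (hE.forall_eq_or_forall_eq h hd hdc.symm)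

end IsLocallyGood

end IsLocallyGood

section Band

/-- The hyperedges at `u` are exactly `{u, a, b}`, `{u, b, c}` and `{u, c, d}`: the link of `u` is
the path `a b c d`. -/
structure IsLinkPath (E : Finset (Finset V)) (u a b c d : V) : Prop where
  nodup : [a, b, c, d].Nodup
  left : IsTriangle E u a b
  middle : IsTriangle E u b c
  right : IsTriangle E u c d
  eq_of_mem : ∀ e ∈ E, u ∈ e → e = {u, a, b} ∨ e = {u, b, c} ∨ e = {u, c, d}

/-- Five vertices in cyclic order, any three consecutive ones forming a hyperedge: the five-vertex
triangulation of the Möbius band. -/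
structure IsBand (E : Finset (Finset V)) (x : Fin 5 → V) : Prop where
  injective : Function.Injective x
  isTriangle : ∀ i, IsTriangle E (x i) (x (i + 1)) (x (i + 2))

variable {E : Finset (Finset V)} {u a b c d : V}

namespace IsLinkPath

theorem reverse (h : IsLinkPath E u a b c d) : IsLinkPath E u d c b a where
  nodup := by grind [h.nodup]
  left := h.right.swap_right
  middle := h.middle.swap_right
  right := h.left.swap_right
  eq_of_mem e he hu := by grind [h.eq_of_mem e he hu]

theorem mem_of_isTriangle {s t : V} (h : IsLinkPath E u a b c d) (hs : IsTriangle E u s t) :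
    s ∈ [a, b, c, d] := by
  have hmem : s ∈ ({u, s, t} : Finset V) := by simp
  grind [h.eq_of_mem _ hs.mem, hs.1]

theorem eq_of_isTriangle {s : V} (h : IsLinkPath E u a b c d) (hs : IsTriangle E u d s) :
    s = c := by
  have hd : d ∈ ({u, d, s} : Finset V) := by simp
  have hmem : s ∈ ({u, d, s} : Finset V) := by simp
  grind [h.eq_of_mem _ hs.mem, h.nodup, hs.1, hs.2.1, hs.2.2.1]

end IsLinkPath

namespace IsLocallyGood

variable (hE : IsLocallyGood E)
include hE

theorem isLinkPath (hab : IsTriangle E u a b) (hbc : IsTriangle E u b c)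
    (hcd : IsTriangle E u c d) (hac : a ≠ c) (hbd : b ≠ d) (hu : hdeg E u ≤ 3) :
    IsLinkPath E u a b c d := by
  have had : a ≠ d := by
    rintro rfl
    exact hE.not_isTriangle_of_two hbc.swap_right hcd hab.swap_right
  have hsub : {{u, a, b}, {u, b, c}, {u, c, d}} ⊆ E.filter (u ∈ ·) := by
    simp [Finset.insert_subset_iff, hab.mem, hbc.mem, hcd.mem]
  have hcard : ({{u, a, b}, {u, b, c}, {u, c, d}} : Finset (Finset V)).card = 3 := by
    have ha : a ∉ ({u, b, c} : Finset V) := by grind [hab.1, hab.2.2.1]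
    have ha' : a ∉ ({u, c, d} : Finset V) := by grind [hab.1]
    have hb : b ∉ ({u, c, d} : Finset V) := by grind [hbc.1, hbc.2.2.1]
    exact Finset.card_eq_three.2 ⟨_, _, _, by grind, by grind, by grind, rfl⟩
  have heq := Finset.eq_of_subset_of_card_le hsub (hu.trans hcard.ge)
  refine ⟨by grind [hab.2.2.1, hbc.2.2.1, hcd.2.2.1], hab, hbc, hcd, fun e he hue => ?_⟩
  have : e ∈ E.filter (u ∈ ·) := by grind
  grind

theorem exists_isTriangle_two {e : Finset V} (he : e ∈ E) (hu : u ∈ e) :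
    ∃ q p r, e = {u, q, p} ∧ IsTriangle E u q p ∧ IsTriangle E u q r ∧ p ≠ r := by
  obtain ⟨s, hs, hsu⟩ := Finset.exists_mem_ne (s := e) (by grind [hE.uniform e he]) u
  obtain ⟨t, rfl, h⟩ := hE.uniform.exists_isTriangle he hu hs hsu.symm
  obtain ⟨d, hd, h'⟩ | ⟨d, hd, h'⟩ := hE.exists_isTriangle_ne h.rotate
  · exact ⟨s, t, d, rfl, h, h'.swap, hd.symm⟩
  · exact ⟨t, s, d, by grind, h.swap_right, h'.swap, hd.symm⟩

theorem exists_isLinkPath {e : Finset V} (he : e ∈ E) (hue : u ∈ e) (hu : hdeg E u ≤ 3) :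
    ∃ a b c d, IsLinkPath E u a b c d := by
  obtain ⟨q, p, r, -, hp, hr, hpr⟩ := hE.exists_isTriangle_two he hue
  have hp_notMem : p ∉ ({u, q, r} : Finset V) := by grind [hp.2.1, hp.2.2.1]
  obtain ⟨g, hgp, hgr, hg⟩ := exists_eq_triple_of_card_eq_three
    (hu.antisymm (hE.three_le_hdeg he hue))
    (a := {u, q, p}) (b := {u, q, r}) (by simp [hp.mem]) (by simp [hr.mem]) (by grind)
  have hg_mem : g ∈ E.filter (u ∈ ·) := by rw [hg]; simp
  obtain ⟨hgE, hug⟩ := Finset.mem_filter.1 hg_mem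
  obtain ⟨s, t, d, rfl, ht, hd, htd⟩ := hE.exists_isTriangle_two hgE hug
  have hsq : s ≠ q := by
    rintro rfl
    grind [hE.eq_or_eq hp hr hpr ht]
  have hsd : {u, s, d} ∈ E.filter (u ∈ ·) := by simp [hd.mem]
  obtain rfl | rfl : s = p ∨ s = r := by
    have hs : s ∈ ({u, s, d} : Finset V) := by simp
    have hd' : d ∉ ({u, s, t} : Finset V) := by grind [hd.2.1, hd.2.2.1]
    grind [hd.1]
  · have htq : t ≠ q := fun h => hgp (by rw [h, Finset.pair_comm])
    exact ⟨t, s, q, r, hE.isLinkPath ht.swap_right hp.swap_right hr htq hpr hu⟩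
  · have htq : t ≠ q := fun h => hgr (by rw [h, Finset.pair_comm])
    exact ⟨t, s, q, p, hE.isLinkPath ht.swap_right hr.swap_right hp htq hpr.symm hu⟩

theorem isTriangle_of_isLinkPath (h : IsLinkPath E u a b c d) : IsTriangle E c d a := by
  obtain ⟨s, hs, hcd⟩ : ∃ s, s ≠ u ∧ IsTriangle E c d s := by
    refine (hE.exists_isTriangle_ne h.right).resolve_left ?_
    exact fun ⟨s, hsc, hs⟩ => hsc (h.eq_of_isTriangle hs)
  obtain ⟨t, ht⟩ := hE.exists_isTriangle_opposite h.right.rotate hcd hs.symm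
  have hs_mem : s ∈ [a, b, c, d] := h.mem_of_isTriangle ht
  have hsb : s ≠ b := by
    rintro rfl
    exact hE.not_isTriangle_of_two h.middle.rotate.rotate h.right.swap hcd.swap_right
  obtain rfl : s = a := by grind [hcd.2.1, hcd.2.2.1]
  exact hcd

theorem exists_isBand {e : Finset V} (he : e ∈ E) (hue : u ∈ e) (hu : hdeg E u ≤ 3) :
    ∃ x, IsBand E x ∧ ∀ f ∈ E, u ∈ f → f ⊆ Finset.univ.image x := by
  obtain ⟨a, b, c, d, h⟩ := hE.exists_isLinkPath he hue hu
  have hcda := hE.isTriangle_of_isLinkPath h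
  have hbad := hE.isTriangle_of_isLinkPath h.reverse
  refine ⟨![u, b, a, d, c], ⟨?_, ?_⟩, fun f hf huf => ?_⟩
  · rw [← List.nodup_ofFn]
    simpa using by grind [h.nodup, h.left.1, h.left.2.1, h.right.1, h.right.2.1]
  · intro i
    fin_cases i
    exacts [h.left.swap_right, hbad, hcda.rotate.rotate.swap_right, h.right.rotate.swap,
      h.middle.rotate.rotate]
  · obtain rfl | rfl | rfl := h.eq_of_mem f hf huf <;>
      simp [Finset.insert_subset_iff, Fin.exists_fin_succ]

end IsLocallyGood

namespace IsBand

variable {x : Fin 5 → V}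

theorem five_le_card (hx : IsBand E x) : 5 ≤ {e ∈ E | e ⊆ Finset.univ.image x}.card := by
  let T : Fin 5 → Finset (Fin 5) := fun i => {i, i + 1, i + 2}
  have hT : Function.Injective T := by decide
  have hsub : Finset.univ.image (fun i => (T i).image x) ⊆ {e ∈ E | e ⊆ Finset.univ.image x} := by
    intro e he
    obtain ⟨i, -, rfl⟩ := Finset.mem_image.1 he
    refine Finset.mem_filter.2 ⟨?_, Finset.image_subset_image (Finset.subset_univ _)⟩
    simpa [T, Finset.image_insert] using (hx.isTriangle i).mem
  have hinj : Function.Injective fun i => (T i).image x :=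
    (Finset.image_injective hx.injective).comp hT
  calc 5 = (Finset.univ.image fun i => (T i).image x).card := by
        rw [Finset.card_image_of_injective _ hinj, Finset.card_fin]
    _ ≤ _ := Finset.card_le_card hsub

theorem isTriangle_pred (hx : IsBand E x) (i : Fin 5) :
    IsTriangle E (x i) (x (i + 1)) (x (i + 4)) := by
  have h := (hx.isTriangle (i + 4)).rotate
  rwa [show i + 4 + 1 = i by grind, show i + 4 + 2 = i + 1 by grind] at h

theorem eq_or_eq_of_isTriangle_succ (hx : IsBand E x) (hE : IsLocallyGood E) {i : Fin 5}
    (h : IsTriangle E (x i) (x (i + 1)) c) : c = x (i + 2) ∨ c = x (i + 4) :=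
  hE.eq_or_eq (hx.isTriangle i) (hx.isTriangle_pred i) (hx.injective.ne (by grind)) h

theorem eq_of_isTriangle_add_two (hx : IsBand E x) (hE : IsLocallyGood E) {i : Fin 5}
    (h : IsTriangle E (x i) (x (i + 2)) c) : c = x (i + 1) := by
  have hsucc : IsTriangle E (x (i + 1)) (x (i + 2)) (x (i + 3)) := by
    have h' := hx.isTriangle (i + 1)
    rwa [show i + 1 + 1 = i + 2 by grind, show i + 1 + 2 = i + 3 by grind] at h'
  obtain h' | h' := hE.forall_eq_or_forall_eq (hx.isTriangle i).rotate hsucc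
    (hx.injective.ne (by grind))
  · exact absurd (h' _ (hx.isTriangle_pred i).swap) (hx.injective.ne (by grind))
  · exact h' c h.swap

theorem subset_of_mem (hx : IsBand E x) (hE : IsLocallyGood E) {e : Finset V} (he : e ∈ E)
    {p q : V} (hp : p ∈ Finset.univ.image x) (hq : q ∈ Finset.univ.image x) (hpe : p ∈ e)
    (hqe : q ∈ e) (hpq : p ≠ q) : e ⊆ Finset.univ.image x := by
  obtain ⟨i, -, rfl⟩ := Finset.mem_image.1 hp
  obtain ⟨j, -, rfl⟩ := Finset.mem_image.1 hq
  obtain ⟨c, rfl, hc⟩ := hE.uniform.exists_isTriangle he hpe hqe hpq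
  suffices hc : ∃ k, c = x k by grind
  have hj : j = i + 1 ∨ j = i + 2 ∨ i = j + 1 ∨ i = j + 2 := by grind
  obtain rfl | rfl | rfl | rfl := hj
  · exact (hx.eq_or_eq_of_isTriangle_succ hE hc).elim (⟨_, ·⟩) (⟨_, ·⟩)
  · exact ⟨_, hx.eq_of_isTriangle_add_two hE hc⟩
  · exact (hx.eq_or_eq_of_isTriangle_succ hE hc.swap).elim (⟨_, ·⟩) (⟨_, ·⟩)
  · exact ⟨_, hx.eq_of_isTriangle_add_two hE hc.swap⟩

end IsBand

end Band

section Counting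

variable {E : Finset (Finset V)}

theorem card_mul_le_card_mul_of_le_hdeg {W : Finset V} {k m : ℕ} (hk : ∀ w ∈ W, k ≤ hdeg E w)
    (hm : ∀ e ∈ E, (W ∩ e).card ≤ m) : W.card * k ≤ E.card * m :=
  (Finset.le_sum_card_inter hk).trans (Finset.sum_le_card_nsmul _ _ _ hm)

theorem IsLocallyGood.one_lt_card_of_cover {α : Type*} {E : Finset (Finset α)}
    (hE : IsLocallyGood E) {T e : Finset α} {a : α} (he : e ∈ E) (ha : a ∈ e)
    (hT : ∀ f ∈ E, a ∈ f → ∃ b ∈ T, a ≠ b ∧ b ∈ f) : 1 < T.card := by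
  classical
  have hsub : E.filter (a ∈ ·) ⊆ {b ∈ T | a ≠ b}.biUnion fun b => {f ∈ E | a ∈ f ∧ b ∈ f} := by
    intro f hf
    obtain ⟨hf, haf⟩ := Finset.mem_filter.1 hf
    obtain ⟨b, hb, hab, hbf⟩ := hT f hf haf
    simp only [Finset.mem_biUnion, Finset.mem_filter]
    exact ⟨b, ⟨hb, hab⟩, hf, haf, hbf⟩
  have hle : {b ∈ T | a ≠ b}.card ≤ T.card := Finset.card_filter_le _ _
  have hdeg_le : hdeg E a ≤ {b ∈ T | a ≠ b}.card * 2 :=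
    (Finset.card_le_card hsub).trans <| Finset.card_biUnion_le_card_mul _ _ _ fun b hb =>
      hE.card_filter_mem_le_two (Finset.mem_filter.1 hb).2
  have := hE.three_le_hdeg he ha
  omega

theorem IsLocallyGood.three_le_card_of_forall_inter_ne_singleton (hE : IsLocallyGood E)
    {W : Finset V} (hW : W.Nonempty) (hmem : ∀ w ∈ W, ∃ e ∈ E, w ∈ e)
    (hne : ∀ e ∈ E, ∀ a, W ∩ e ≠ {a}) : 3 ≤ W.card := by
  obtain ⟨w, hw⟩ := hW
  obtain ⟨e, he, hwe⟩ := hmem w hw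
  have hlt : 1 < (W.erase w).card := by
    refine hE.one_lt_card_of_cover he hwe fun f hf hwf => ?_
    by_contra! h
    exact hne f hf w (by grind)
  grind

/-- Some pair `{a, b} ⊆ W` lies in no other hyperedge, so the third vertex `c` of `W` is in every
hyperedge at `a`; but `{a, c}` lies in at most two hyperedges. -/
theorem IsLocallyGood.exists_inter_eq_singleton (hE : IsLocallyGood E) {W : Finset V}
    (hW : W ∈ E) : ∃ e ∈ E, ∃ a, W ∩ e = {a} := by
  by_contra! hne
  obtain ⟨a, b, c, hab, hac, hbc, rfl⟩ := Finset.card_eq_three.1 (hE.uniform W hW)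
  have key {a b c : V} (h : IsTriangle E a b c) (h_cover : ∀ e ∈ E, a ∈ e → b ∈ e ∨ c ∈ e)
      (hb : ∀ d, IsTriangle E a b d → d = c) : False := by
    have hc : ∀ f ∈ E, a ∈ f → c ∈ f := by
      refine fun f hf haf => (h_cover f hf haf).elim (fun hbf => ?_) id
      obtain ⟨d, rfl, hd⟩ := hE.uniform.exists_isTriangle hf haf hbf h.1
      simp [hb d hd]
    have ha : a ∈ ({a, b, c} : Finset V) := by simp
    have hlt := hE.one_lt_card_of_cover (T := {c}) h.mem ha (by simpa [h.2.1] using hc)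
    simp at hlt
  have h : IsTriangle E a b c := ⟨hab, hac, hbc, hW⟩
  have h_cover_a : ∀ e ∈ E, a ∈ e → b ∈ e ∨ c ∈ e := by
    intro e he hae
    by_contra! h
    exact hne e he a (by grind)
  have h_cover_b : ∀ e ∈ E, b ∈ e → c ∈ e ∨ a ∈ e := by
    intro e he hae
    by_contra! h
    exact hne e he b (by grind)
  obtain hb | hc | ha := hE.exists_boundary h
  · exact key h h_cover_a hb
  · exact key h.swap_right (fun e he hae => (h_cover_a e he hae).symm) hc
  · exact key h.rotate h_cover_b ha

variable {S W : Finset V} {u w : V}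

theorem card_mul_three_le (h3 : Is3Uniform E) (hk : ∀ w ∈ W, 3 ≤ hdeg E w)
    (hW : ∀ e ∈ E, ¬Disjoint e S → (W ∩ e).card ≤ 2) :
    W.card * 3 ≤ (E.filter (Disjoint · S)).card * 3 + (E.filter (¬Disjoint · S)).card * 2 := by
  refine (Finset.le_sum_card_inter hk).trans ?_
  rw [← Finset.sum_filter_add_sum_filter_not E (Disjoint · S)]
  refine add_le_add (Finset.sum_le_card_nsmul _ _ _ fun e he => ?_)
    (Finset.sum_le_card_nsmul _ _ _ fun e he => ?_)
  · exact (Finset.card_le_card Finset.inter_subset_right).trans (h3 e (Finset.mem_filter.1 he).1).le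
  · exact hW e (Finset.mem_filter.1 he).1 (Finset.mem_filter.1 he).2

theorem GoodPair.two_le_hdeg_filter_not_disjoint (h : GoodPair E u w)
    (hu : ∀ e ∈ E, u ∈ e → e ⊆ S) : 2 ≤ hdeg (E.filter (¬Disjoint · S)) w := by
  obtain ⟨x, y, ⟨D⟩⟩ := h.exists_bergeDiamond
  have hx : x ∈ S := hu _ D.px_mem D.mem_px.1 D.mem_px.2
  have hy : y ∈ S := hu _ D.py_mem D.mem_py.1 D.mem_py.2
  refine Finset.one_lt_card.2 ⟨D.qx, ?_, D.qy, ?_, by grind [D.edges_nodup]⟩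
  · simpa only [Finset.mem_filter, Finset.not_disjoint_iff] using
      ⟨⟨D.qx_mem, x, D.mem_qx.2, hx⟩, D.mem_qx.1⟩
  · simpa only [Finset.mem_filter, Finset.not_disjoint_iff] using
      ⟨⟨D.qy_mem, y, D.mem_qy.2, hy⟩, D.mem_qy.1⟩

theorem hdeg_filter_not_subset (hw : w ∉ S) : hdeg (E.filter (¬· ⊆ S)) w = hdeg E w := by
  unfold hdeg
  rw [Finset.filter_filter]
  exact congrArg _ (Finset.filter_congr fun e _ => ⟨And.right, fun h => ⟨fun hS => hw (hS h), h⟩⟩)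

theorem card_eq_three_and_exists_disjoint (h3 : Is3Uniform E) (hW : 3 ≤ W.card)
    (hk : ∀ w ∈ W, 3 ≤ hdeg E w) (hk' : ∀ w ∈ W, 2 ≤ hdeg (E.filter (¬Disjoint · S)) w)
    (hWS : ∀ e ∈ E, ¬Disjoint e S → (W ∩ e).card ≤ 2) (hcard : E.card ≤ W.card + 1) :
    W.card = 3 ∧ ∃ e ∈ E, Disjoint e S := by
  have hle : W.card * 2 ≤ (E.filter (¬Disjoint · S)).card * 2 :=
    card_mul_le_card_mul_of_le_hdeg hk' fun e he =>
      hWS e (Finset.mem_filter.1 he).1 (Finset.mem_filter.1 he).2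
  have hle' := card_mul_three_le h3 hk hWS
  have hsplit := Finset.card_filter_add_card_filter_not (s := E) (Disjoint · S)
  refine ⟨by omega, ?_⟩
  obtain ⟨e, he⟩ : (E.filter (Disjoint · S)).Nonempty := Finset.card_pos.1 (by omega)
  exact ⟨e, Finset.mem_filter.1 he⟩

theorem card_inter_add_card_inter {e : Finset V} (hWS : Disjoint W S) (he : e ⊆ W ∪ S) :
    (W ∩ e).card + (S ∩ e).card = e.card := by
  rw [← Finset.card_union_of_disjoint (hWS.mono Finset.inter_subset_left Finset.inter_subset_left),
    ← Finset.union_inter_distrib_right, Finset.inter_eq_right.2 he]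

theorem inter_ne_singleton (h3 : Is3Uniform E) (hWS : Disjoint W S) (hsub : ∀ e ∈ E, e ⊆ W ∪ S)
    (hS : ∀ e ∈ E, ¬e ⊆ S → (S ∩ e).card ≤ 1) {e : Finset V} (he : e ∈ E) (a : V) :
    W ∩ e ≠ {a} := by
  intro hea
  obtain ⟨haW, hae⟩ : a ∈ W ∧ a ∈ e := Finset.mem_inter.1 (by simp [hea])
  have hle := hS e he fun h => Finset.disjoint_left.1 hWS haW (h hae)
  have hadd := (card_inter_add_card_inter hWS (hsub e he)).trans (h3 e he)
  rw [hea, Finset.card_singleton] at hadd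
  omega

theorem IsLocallyGood.card_add_two_le_card_filter_not_subset (hE : IsLocallyGood E)
    (hW : W.Nonempty) (hWS : Disjoint W S) (hsub : ∀ e ∈ E, e ⊆ W ∪ S)
    (hS : ∀ e ∈ E, ¬e ⊆ S → (S ∩ e).card ≤ 1) (hu : ∀ e ∈ E, u ∈ e → e ⊆ S)
    (hgood : ∀ w ∈ W, GoodPair E u w) :
    W.card + 2 ≤ {e ∈ E | ¬e ⊆ S}.card := by
  by_contra! hlt
  set F := {e ∈ E | ¬e ⊆ S} with hF
  have hFE : F ⊆ E := Finset.filter_subset _ _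
  have hnotMem : ∀ w ∈ W, w ∉ S := fun w hw => Finset.disjoint_left.1 hWS hw
  have hne_singleton : ∀ e ∈ E, ∀ a, W ∩ e ≠ {a} := fun e he =>
    inter_ne_singleton hE.uniform hWS hsub hS he
  have hle_two : ∀ e ∈ F, ¬Disjoint e S → (W ∩ e).card ≤ 2 := by
    intro e he hdisj
    rw [disjoint_comm, Finset.not_disjoint_iff_nonempty_inter, ← Finset.card_pos] at hdisj
    have hadd := card_inter_add_card_inter hWS (hsub e (hFE he))
    have h3 := hE.uniform e (hFE he)
    omega
  have hmem : ∀ w ∈ W, ∃ e ∈ E, w ∈ e := fun w hw =>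
    let ⟨_, _, ⟨D⟩⟩ := (hgood w hw).exists_bergeDiamond
    ⟨_, D.qx_mem, D.mem_qx.1⟩
  have three_le_hdeg : ∀ w ∈ W, 3 ≤ hdeg F w := by
    intro w hw
    obtain ⟨e, he, hwe⟩ := hmem w hw
    exact (hE.three_le_hdeg he hwe).trans_eq (hdeg_filter_not_subset (hnotMem w hw)).symm
  have two_le_hdeg : ∀ w ∈ W, 2 ≤ hdeg (F.filter (¬Disjoint · S)) w := by
    intro w hw
    rw [hF, Finset.filter_comm, hdeg_filter_not_subset (hnotMem w hw)]
    exact (hgood w hw).two_le_hdeg_filter_not_disjoint hu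
  obtain ⟨hW3, e, he, hdisj⟩ := card_eq_three_and_exists_disjoint
    (fun e he => hE.uniform e (hFE he))
    (hE.three_le_card_of_forall_inter_ne_singleton hW hmem hne_singleton)
    three_le_hdeg two_le_hdeg hle_two (by omega)
  obtain rfl : e = W := by
    refine Finset.eq_of_subset_of_card_le (fun a ha => ?_) (by rw [hW3, hE.uniform e (hFE he)])
    exact (Finset.mem_union.1 (hsub e (hFE he) ha)).resolve_right (Finset.disjoint_left.1 hdisj ha)
  obtain ⟨f, hf, a, hfa⟩ := hE.exists_inter_eq_singleton (hFE he)
  exact hne_singleton f hf a hfa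

theorem exists_hdeg_le_three {U : Finset V} (h3 : Is3Uniform E)
    (hcard : E.card * 3 < U.card * 4) : ∃ u ∈ U, hdeg E u ≤ 3 := by
  by_contra! h
  refine hcard.not_ge (card_mul_le_card_mul_of_le_hdeg h fun e he => ?_)
  exact (Finset.card_le_card Finset.inter_subset_right).trans (h3 e he).le

theorem card_add_two_le_of_forall_goodPair {α : Type*} {E : Finset (Finset α)} {U : Finset α}
    (hU : 6 ≤ U.card) (h3 : Is3Uniform E) (hfree : ¬IsBergeK4 E) (hsub : ∀ e ∈ E, e ⊆ U)
    (hgood : ∀ p ∈ U, ∀ q ∈ U, p ≠ q → GoodPair E p q) : U.card + 2 ≤ E.card := by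
  classical
  by_contra! hlt
  have hE : IsLocallyGood E :=
    ⟨h3, hfree, fun e he p hp q hq => hgood p (hsub e he hp) q (hsub e he hq)⟩
  obtain ⟨u, hu, hdeg_u⟩ := exists_hdeg_le_three (U := U) h3 (by omega)
  obtain ⟨v, hv, hvu⟩ := Finset.exists_mem_ne (s := U) (by omega) u
  obtain ⟨_, _, ⟨D⟩⟩ := (hgood u hu v hv hvu.symm).exists_bergeDiamond
  obtain ⟨x, hx, hux⟩ := hE.exists_isBand D.px_mem D.mem_px.1 hdeg_u
  set S := Finset.univ.image x
  have hSU : S ⊆ U := by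
    simp only [S, Finset.image_subset_iff, Finset.mem_univ, forall_const]
    exact fun i => hsub _ (hx.isTriangle i).mem (by simp)
  have hScard : S.card = 5 := Finset.card_image_of_injective _ hx.injective
  have hWcard := Finset.card_sdiff_add_card_eq_card hSU
  have huS : u ∈ S := hux _ D.px_mem D.mem_px.1 D.mem_px.1
  have hW : (U \ S).Nonempty := Finset.card_pos.1 (by omega)
  have hle : (U \ S).card + 2 ≤ {e ∈ E | ¬e ⊆ S}.card := by
    refine hE.card_add_two_le_card_filter_not_subset (u := u) hW Finset.sdiff_disjoint ?_ ?_ hux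
      fun w hw => ?_
    · rwa [Finset.sdiff_union_of_subset hSU]
    · intro e he heS
      refine Finset.card_le_one.2 fun p hp q hq => not_imp_comm.1 ?_ heS
      rw [Finset.mem_inter] at hp hq
      exact hx.subset_of_mem hE he hp.1 hq.1 hp.2 hq.2
    · obtain ⟨hwU, hwS⟩ := Finset.mem_sdiff.1 hw
      exact hgood u hu w hwU (ne_of_mem_of_not_mem huS hwS)
  have hcard := Finset.card_filter_add_card_filter_not (s := E) (· ⊆ S)
  have hfive : 5 ≤ {e ∈ E | e ⊆ S}.card := hx.five_le_card
  omega

end Counting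

section Construction

/-- A Berge triangle in `E` with core `a, b, c`. -/
def HasBergeTriangle {α : Type*} (E : Finset (Finset α)) (a b c : α) : Prop :=
  ∃ ab ∈ E, ∃ ac ∈ E, ∃ bc ∈ E, [ab, ac, bc].Nodup ∧
    (a ∈ ab ∧ b ∈ ab) ∧ (a ∈ ac ∧ c ∈ ac) ∧ b ∈ bc ∧ c ∈ bc

/-- `E` is a Berge-`K₄`-saturated `3`-uniform hypergraph on the vertex set `S`, in which the *hub*
`x, y` is a good pair and forms a Berge triangle with every other vertex. -/
structure IsHubSaturatedOn {α : Type*} (E : Finset (Finset α)) (S : Finset α) (x y : α) :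
    Prop where
  uniform : Is3Uniform E
  subset : ∀ e ∈ E, e ⊆ S
  free : ¬IsBergeK4 E
  exists_goodPair : ∀ e ⊆ S, e.card = 3 → e ∉ E → ∃ p ∈ e, ∃ q ∈ e, GoodPair E p q
  goodPair : GoodPair E x y
  hasBergeTriangle : ∀ s ∈ S, s ≠ x → s ≠ y → HasBergeTriangle E s x y

theorem HasBergeTriangle.mono {α : Type*} {E F : Finset (Finset α)} {a b c : α}
    (h : HasBergeTriangle E a b c) (hEF : E ⊆ F) : HasBergeTriangle F a b c :=
  let ⟨_, hab, _, hac, _, hbc, h⟩ := h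
  ⟨_, hEF hab, _, hEF hac, _, hEF hbc, h⟩

theorem IsHubSaturatedOn.isSaturated [Fintype V] {E : Finset (Finset V)} {x y : V}
    (hE : IsHubSaturatedOn E Finset.univ x y) : IsSaturated E := by
  refine ⟨hE.uniform, hE.free, fun e he heE => ?_⟩
  obtain ⟨p, hp, q, hq, h⟩ := hE.exists_goodPair e (Finset.subset_univ e) he heE
  exact h.isBergeK4_insert heE hp hq

variable {E F : Finset (Finset V)} {S : Finset V} {p q s x y : V}

theorem IsBergeK4.six_le_card {α : Type*} {E : Finset (Finset α)} (h : IsBergeK4 E) :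
    6 ≤ E.card := by
  classical
  obtain ⟨a, b, c, d, -, -, -, -, -, -, ab, ac, ad, bc, bd, cd, h⟩ := h
  have hsub : [ab, ac, ad, bc, bd, cd].toFinset ⊆ E := by
    simp [Finset.insert_subset_iff, h]
  have hle := Finset.card_le_card hsub
  rwa [List.toFinset_card_of_nodup (by simp only [h])] at hle

/-- Core vertices have degree at least three, so a hyperedge with at most one such vertex is never
assigned to a pair. -/
theorem IsBergeK4.of_subsingleton_three_le_hdeg (h : IsBergeK4 E)
    (hF : ∀ e ∈ E, e ∉ F → ∀ p ∈ e, ∀ q ∈ e, 3 ≤ hdeg E p → 3 ≤ hdeg E q → p = q) :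
    IsBergeK4 F := by
  obtain ⟨a, b, c, d, hab, hac, had, hbc, hbd, hcd, ab, ac, ad, bc, bd, cd, h⟩ := h
  have ha : 3 ≤ hdeg E a := three_le_hdeg (f := ab) (g := ac) (h := ad) (by grind) (by grind)
    (by grind) (by grind) (by grind) (by grind) (by grind)
  have hb : 3 ≤ hdeg E b := three_le_hdeg (f := ab) (g := bc) (h := bd) (by grind) (by grind)
    (by grind) (by grind) (by grind) (by grind) (by grind)
  have hc : 3 ≤ hdeg E c := three_le_hdeg (f := ac) (g := bc) (h := cd) (by grind) (by grind)
    (by grind) (by grind) (by grind) (by grind) (by grind)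
  have hd : 3 ≤ hdeg E d := three_le_hdeg (f := ad) (g := bd) (h := cd) (by grind) (by grind)
    (by grind) (by grind) (by grind) (by grind) (by grind)
  have mem_F {e : Finset V} {p q : V} (he : e ∈ E) (hp : p ∈ e) (hq : q ∈ e) (hpq : p ≠ q)
      (h3p : 3 ≤ hdeg E p) (h3q : 3 ≤ hdeg E q) : e ∈ F :=
    not_imp_comm.1 (fun heF => hF e he heF p hp q hq h3p h3q) hpq
  exact ⟨a, b, c, d, hab, hac, had, hbc, hbd, hcd, ab, ac, ad, bc, bd, cd,
    mem_F h.1 (by grind) (by grind) hab ha hb, mem_F h.2.1 (by grind) (by grind) hac ha hc,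
    mem_F h.2.2.1 (by grind) (by grind) had ha hd, mem_F h.2.2.2.1 (by grind) (by grind) hbc hb hc,
    mem_F h.2.2.2.2.1 (by grind) (by grind) hbd hb hd,
    mem_F h.2.2.2.2.2.1 (by grind) (by grind) hcd hc hd, h.2.2.2.2.2.2⟩

section Map

variable {α β : Type*} [DecidableEq β] {E : Finset (Finset α)} {S : Finset α} {p q x y : α}
  (φ : α ↪ β)

/-- The image of a Berge diamond under an injection of the vertices. -/
def BergeDiamond.map (D : BergeDiamond E p q x y) :
    BergeDiamond (E.image (Finset.map φ)) (φ p) (φ q) (φ x) (φ y) where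
  px := D.px.map φ
  py := D.py.map φ
  qx := D.qx.map φ
  qy := D.qy.map φ
  xy := D.xy.map φ
  core_nodup := D.core_nodup.map φ.injective
  edges_nodup := D.edges_nodup.map (Finset.map_injective φ)
  edges_mem := by simpa using D.edges_mem
  mem_px := by simpa using D.mem_px
  mem_py := by simpa using D.mem_py
  mem_qx := by simpa using D.mem_qx
  mem_qy := by simpa using D.mem_qy
  mem_xy := by simpa using D.mem_xy

theorem GoodPair.map (h : GoodPair E p q) : GoodPair (E.image (Finset.map φ)) (φ p) (φ q) :=
  let ⟨_, _, ⟨D⟩⟩ := h.exists_bergeDiamond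
  (D.map φ).goodPair

theorem HasBergeTriangle.map (h : HasBergeTriangle E p q x) :
    HasBergeTriangle (E.image (Finset.map φ)) (φ p) (φ q) (φ x) := by
  obtain ⟨f, hf, g, hg, h, hh, hnodup, hmem⟩ := h
  exact ⟨_, Finset.mem_image_of_mem _ hf, _, Finset.mem_image_of_mem _ hg, _,
    Finset.mem_image_of_mem _ hh, hnodup.map (Finset.map_injective φ), by simpa using hmem⟩

theorem IsBergeK4.of_image_map (h : IsBergeK4 (E.image (Finset.map φ))) : IsBergeK4 E := by
  obtain ⟨a, b, c, d, hab, hac, had, hbc, hbd, hcd, ab, ac, ad, bc, bd, cd, h_ab, h_ac, h_ad, h_bc,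
    h_bd, h_cd, hnodup, hmem⟩ := h
  obtain ⟨ab, k_ab, rfl⟩ := Finset.mem_image.1 h_ab
  obtain ⟨ac, k_ac, rfl⟩ := Finset.mem_image.1 h_ac
  obtain ⟨ad, k_ad, rfl⟩ := Finset.mem_image.1 h_ad
  obtain ⟨bc, k_bc, rfl⟩ := Finset.mem_image.1 h_bc
  obtain ⟨bd, k_bd, rfl⟩ := Finset.mem_image.1 h_bd
  obtain ⟨cd, k_cd, rfl⟩ := Finset.mem_image.1 h_cd
  obtain ⟨a, -, rfl⟩ := Finset.mem_map.1 hmem.1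
  obtain ⟨b, -, rfl⟩ := Finset.mem_map.1 hmem.2.1
  obtain ⟨c, -, rfl⟩ := Finset.mem_map.1 hmem.2.2.2.1
  obtain ⟨d, -, rfl⟩ := Finset.mem_map.1 hmem.2.2.2.2.2.1
  simp only [Finset.mem_map'] at hmem
  exact ⟨a, b, c, d, ne_of_apply_ne φ hab, ne_of_apply_ne φ hac, ne_of_apply_ne φ had,
    ne_of_apply_ne φ hbc, ne_of_apply_ne φ hbd, ne_of_apply_ne φ hcd, ab, ac, ad, bc, bd, cd, k_ab,
    k_ac, k_ad, k_bc, k_bd, k_cd,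
    List.Nodup.of_map (l := [ab, ac, ad, bc, bd, cd]) (Finset.map φ) hnodup, hmem⟩

theorem IsHubSaturatedOn.map (hE : IsHubSaturatedOn E S x y) :
    IsHubSaturatedOn (E.image (Finset.map φ)) (S.map φ) (φ x) (φ y) where
  uniform e he := by
    obtain ⟨f, hf, rfl⟩ := Finset.mem_image.1 he
    rw [Finset.card_map, hE.uniform f hf]
  subset e he := by
    obtain ⟨f, hf, rfl⟩ := Finset.mem_image.1 he
    exact Finset.map_subset_map.2 (hE.subset f hf)
  free h := hE.free (h.of_image_map φ)
  exists_goodPair e he h3 heE := by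
    obtain ⟨f, hf, rfl⟩ := Finset.subset_map_iff.1 he
    rw [Finset.card_map] at h3
    obtain ⟨p, hp, q, hq, h⟩ :=
      hE.exists_goodPair f hf h3 fun h => heE (Finset.mem_image_of_mem _ h)
    exact ⟨φ p, by simpa, φ q, by simpa, h.map φ⟩
  goodPair := hE.goodPair.map φ
  hasBergeTriangle s hs hx hy := by
    obtain ⟨t, ht, rfl⟩ := Finset.mem_map.1 hs
    exact (hE.hasBergeTriangle t ht (ne_of_apply_ne φ hx) (ne_of_apply_ne φ hy)).map φ

end Map

/-- The family `E` with the two hyperedges `{x, p, q}` and `{y, p, q}` added; here `x, y` is to be a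
hub of `E` and `p, q` are two new vertices. -/
def hubExtension (E : Finset (Finset V)) (x y p q : V) : Finset (Finset V) :=
  insert {x, p, q} (insert {y, p, q} E)

theorem mem_hubExtension {e : Finset V} :
    e ∈ hubExtension E x y p q ↔ e = {x, p, q} ∨ e = {y, p, q} ∨ e ∈ E := by
  simp [hubExtension]

theorem hubExtension_comm : hubExtension E x y p q = hubExtension E x y q p := by
  rw [hubExtension, Finset.pair_comm, hubExtension]

theorem subset_hubExtension : E ⊆ hubExtension E x y p q :=
  (Finset.subset_insert _ _).trans (Finset.subset_insert _ _)

theorem card_hubExtension_le : (hubExtension E x y p q).card ≤ E.card + 2 :=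
  (Finset.card_insert_le _ _).trans (Nat.succ_le_succ (Finset.card_insert_le _ _))

theorem hdeg_hubExtension_le_two (hp : ∀ e ∈ E, p ∉ e) : hdeg (hubExtension E x y p q) p ≤ 2 := by
  have hsub : {e ∈ hubExtension E x y p q | p ∈ e} ⊆ {{x, p, q}, {y, p, q}} := by
    intro e he
    obtain ⟨he, hpe⟩ := Finset.mem_filter.1 he
    obtain rfl | rfl | he := mem_hubExtension.1 he
    · simp
    · simp
    · exact absurd hpe (hp e he)
  exact (Finset.card_le_card hsub).trans Finset.card_le_two

theorem not_isBergeK4_hubExtension (hE : ¬IsBergeK4 E) (hp : ∀ e ∈ E, p ∉ e)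
    (hq : ∀ e ∈ E, q ∉ e) : ¬IsBergeK4 (hubExtension E x y p q) := by
  refine fun h => hE (h.of_subsingleton_three_le_hdeg fun e he heE => ?_)
  have hp_lt := hdeg_hubExtension_le_two (x := x) (y := y) (q := q) hp
  have hq_lt := hdeg_hubExtension_le_two (x := x) (y := y) (q := p) hq
  rw [hubExtension_comm] at hq_lt
  have eq_of_mem {r z : V} (hr : r ∈ ({z, p, q} : Finset V))
      (h : 3 ≤ hdeg (hubExtension E x y p q) r) : r = z := by
    obtain rfl | rfl | rfl : r = z ∨ r = p ∨ r = q := by simpa using hr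
    · rfl
    · omega
    · omega
  obtain rfl | rfl | he := mem_hubExtension.1 he
  · exact fun r hr s hs h h' => (eq_of_mem hr h).trans (eq_of_mem hs h').symm
  · exact fun r hr s hs h h' => (eq_of_mem hr h).trans (eq_of_mem hs h').symm
  · exact absurd he heE

theorem HasBergeTriangle.goodPair_hubExtension (h : HasBergeTriangle E s x y)
    (hcore : [s, x, y].Nodup) (hp : ∀ e ∈ E, p ∉ e) (hq : ∀ e ∈ E, q ∉ e) :
    GoodPair (hubExtension E x y p q) p s := by
  obtain ⟨sx, hsx, sy, hsy, xy, hxy, hnodup, mem_sx, mem_sy, mem_xy⟩ := h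
  have hx : x ∉ ({y, p, q} : Finset V) := by grind
  have hne : ∀ f ∈ [sx, sy, xy], p ∉ f := by grind
  exact BergeDiamond.goodPair (x := x) (y := y)
    { px := {x, p, q}
      py := {y, p, q}
      qx := sx
      qy := sy
      xy := xy
      core_nodup := by grind
      edges_nodup := by
        have hxs : {x, p, q} ∉ [sx, sy, xy] := fun h => hne _ h (by simp)
        have hys : {y, p, q} ∉ [sx, sy, xy] := fun h => hne _ h (by simp)
        exact List.nodup_cons.2 ⟨by grind, List.nodup_cons.2 ⟨hys, hnodup⟩⟩
      edges_mem := by simp [mem_hubExtension, hsx, hsy, hxy]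
      mem_px := by simp
      mem_py := by simp
      mem_qx := mem_sx
      mem_qy := mem_sy
      mem_xy := mem_xy }

namespace IsHubSaturatedOn

theorem hub_mem {α : Type*} {E : Finset (Finset α)} {S : Finset α} {x y : α}
    (hE : IsHubSaturatedOn E S x y) : x ∈ S ∧ y ∈ S ∧ x ≠ y := by
  obtain ⟨_, _, ⟨D⟩⟩ := hE.goodPair.exists_bergeDiamond
  exact ⟨hE.subset _ D.px_mem D.mem_px.1, hE.subset _ D.qx_mem D.mem_qx.1, by grind [D.core_nodup]⟩

theorem exists_goodPair_hubExtension (hE : IsHubSaturatedOn E S x y) (hp : p ∉ S) (hq : q ∉ S)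
    {e : Finset V} (he : e ⊆ insert p (insert q S)) (h3 : e.card = 3)
    (heE : e ∉ hubExtension E x y p q) (hpe : p ∈ e) :
    ∃ r ∈ e, ∃ s ∈ e, GoodPair (hubExtension E x y p q) r s := by
  obtain ⟨-, -, hxy⟩ := hE.hub_mem
  by_cases hs : ∃ s ∈ e, s ∈ S ∧ s ≠ x ∧ s ≠ y
  · obtain ⟨s, hse, hs, hsx, hsy⟩ := hs
    refine ⟨p, hpe, s, hse, (hE.hasBergeTriangle s hs hsx hsy).goodPair_hubExtension ?_ ?_ ?_⟩
    · simp [hsx, hsy, hxy]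
    · exact fun f hf h => hp (hE.subset f hf h)
    · exact fun f hf h => hq (hE.subset f hf h)
  by_cases hxy_mem : x ∈ e ∧ y ∈ e
  · exact ⟨x, hxy_mem.1, y, hxy_mem.2, hE.goodPair.mono subset_hubExtension⟩
  have hsub : e ⊆ {x, p, q} ∨ e ⊆ {y, p, q} := by grind
  have hcard (z : V) : ({z, p, q} : Finset V).card ≤ e.card := Finset.card_le_three.trans h3.ge
  rw [mem_hubExtension] at heE
  obtain h | h := hsub
  · exact absurd (.inl (Finset.eq_of_subset_of_card_le h (hcard x))) heE
  · exact absurd (.inr (.inl (Finset.eq_of_subset_of_card_le h (hcard y)))) heE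

theorem hasBergeTriangle_hubExtension (hE : IsHubSaturatedOn E S x y) (hp : p ∉ S) (hq : q ∉ S) :
    HasBergeTriangle (hubExtension E x y p q) p x y := by
  obtain ⟨hx, -, hxy⟩ := hE.hub_mem
  obtain ⟨t, _, ⟨D⟩⟩ := hE.goodPair.exists_bergeDiamond
  obtain ⟨-, -, -, -, xy, hxy_mem, -, -, -, mem_xy⟩ := hE.hasBergeTriangle t
    (hE.subset _ D.px_mem D.mem_px.2) (by grind [D.core_nodup]) (by grind [D.core_nodup])
  have hne : ({x, p, q} : Finset V) ≠ {y, p, q} := by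
    have hx_notMem : x ∉ ({y, p, q} : Finset V) := by grind
    exact ne_of_mem_of_not_mem' (Finset.mem_insert_self x _) hx_notMem
  have hp_notMem : p ∉ xy := fun h => hp (hE.subset xy hxy_mem h)
  have hx_ne : {x, p, q} ≠ xy := ne_of_mem_of_not_mem' (by simp) hp_notMem
  have hy_ne : {y, p, q} ≠ xy := ne_of_mem_of_not_mem' (by simp) hp_notMem
  refine ⟨{x, p, q}, by simp [mem_hubExtension], {y, p, q}, by simp [mem_hubExtension], xy,
    subset_hubExtension hxy_mem, by simp [hne, hx_ne, hy_ne], by simp, by simp, mem_xy⟩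

theorem extend (hE : IsHubSaturatedOn E S x y) (hp : p ∉ S) (hq : q ∉ S) (hpq : p ≠ q) :
    IsHubSaturatedOn (hubExtension E x y p q) (insert p (insert q S)) x y := by
  obtain ⟨hx, hy, -⟩ := hE.hub_mem
  have hp' : ∀ e ∈ E, p ∉ e := fun e he h => hp (hE.subset e he h)
  have hq' : ∀ e ∈ E, q ∉ e := fun e he h => hq (hE.subset e he h)
  refine ⟨fun e he => ?_, fun e he => ?_, not_isBergeK4_hubExtension hE.free hp' hq',
    fun e he h3 heE => ?_, hE.goodPair.mono subset_hubExtension, fun s hs hsx hsy => ?_⟩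
  · obtain rfl | rfl | he := mem_hubExtension.1 he
    · exact Finset.card_eq_three.2
        ⟨x, p, q, ne_of_mem_of_not_mem hx hp, ne_of_mem_of_not_mem hx hq, hpq, rfl⟩
    · exact Finset.card_eq_three.2
        ⟨y, p, q, ne_of_mem_of_not_mem hy hp, ne_of_mem_of_not_mem hy hq, hpq, rfl⟩
    · exact hE.uniform e he
  · obtain rfl | rfl | he := mem_hubExtension.1 he
    · grind
    · grind
    · have := hE.subset e he
      grind
  · by_cases hpe : p ∈ e
    · exact hE.exists_goodPair_hubExtension hp hq he h3 heE hpe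
    by_cases hqe : q ∈ e
    · rw [Finset.insert_comm] at he
      rw [hubExtension_comm] at heE ⊢
      exact hE.exists_goodPair_hubExtension hq hp he h3 heE hqe
    obtain ⟨r, hr, s, hs, h⟩ := hE.exists_goodPair e (by grind) h3 (heE <| subset_hubExtension ·)
    exact ⟨r, hr, s, hs, h.mono subset_hubExtension⟩
  · obtain rfl | rfl | hs : s = p ∨ s = q ∨ s ∈ S := by simpa using hs
    · exact hE.hasBergeTriangle_hubExtension hp hq
    · rw [hubExtension_comm]
      exact hE.hasBergeTriangle_hubExtension hq hp
    · exact (hE.hasBergeTriangle s hs hsx hsy).mono subset_hubExtension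

end IsHubSaturatedOn

end Construction

section Existence

/-- The base of the construction on five vertices, with hub `0, 2`. -/
def hubFive : Finset (Finset (Fin 5)) := {{0, 1, 2}, {0, 1, 3}, {0, 1, 4}, {0, 2, 3}, {2, 3, 4}}

/-- The base of the construction on six vertices, with hub `0, 3`. -/
def hubSix : Finset (Finset (Fin 6)) :=
  {{0, 1, 2}, {0, 1, 3}, {0, 1, 4}, {0, 2, 3}, {0, 2, 5}, {3, 4, 5}}

theorem isHubSaturatedOn_hubFive : IsHubSaturatedOn hubFive Finset.univ 0 2 := by
  have h02 : BergeDiamond hubFive 0 2 1 3 := by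
    refine ⟨{0, 1, 4}, {0, 2, 3}, {0, 1, 2}, {2, 3, 4}, {0, 1, 3}, ?_, ?_, ?_, ?_, ?_, ?_, ?_, ?_⟩
      <;> decide
  have h12 : BergeDiamond hubFive 1 2 0 3 := by
    refine ⟨{0, 1, 4}, {0, 1, 3}, {0, 1, 2}, {2, 3, 4}, {0, 2, 3}, ?_, ?_, ?_, ?_, ?_, ?_, ?_, ?_⟩
      <;> decide
  have h34 : BergeDiamond hubFive 3 4 0 2 := by
    refine ⟨{0, 1, 3}, {0, 2, 3}, {0, 1, 4}, {2, 3, 4}, {0, 1, 2}, ?_, ?_, ?_, ?_, ?_, ?_, ?_, ?_⟩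
      <;> decide
  refine ⟨by unfold Is3Uniform; decide, fun e _ => Finset.subset_univ e, ?_, fun e _ h3 he => ?_,
    h02.goodPair, by unfold HasBergeTriangle; decide⟩
  · exact fun h => absurd h.six_le_card (by decide)
  · have hpair : ∀ e : Finset (Fin 5), e.card = 3 → e ∉ hubFive →
        0 ∈ e ∧ 2 ∈ e ∨ 1 ∈ e ∧ 2 ∈ e ∨ 3 ∈ e ∧ 4 ∈ e := by decide
    obtain ⟨hp, hq⟩ | ⟨hp, hq⟩ | ⟨hp, hq⟩ := hpair e h3 he
    exacts [⟨_, hp, _, hq, h02.goodPair⟩, ⟨_, hp, _, hq, h12.goodPair⟩,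
      ⟨_, hp, _, hq, h34.goodPair⟩]

/-- The hyperedge `{3, 4, 5}` has only one vertex of degree at least three, and without it too few
hyperedges remain. -/
theorem not_isBergeK4_hubSix : ¬IsBergeK4 hubSix := by
  intro h
  have h' : IsBergeK4 (hubSix.erase {3, 4, 5}) := h.of_subsingleton_three_le_hdeg (by decide)
  exact absurd h'.six_le_card (by decide)

theorem isHubSaturatedOn_hubSix : IsHubSaturatedOn hubSix Finset.univ 0 3 := by
  have h03 : BergeDiamond hubSix 0 3 1 2 := by
    refine ⟨{0, 1, 4}, {0, 2, 5}, {0, 1, 3}, {0, 2, 3}, {0, 1, 2}, ?_, ?_, ?_, ?_, ?_, ?_, ?_, ?_⟩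
      <;> decide
  have h04 : BergeDiamond hubSix 0 4 1 3 := by
    refine ⟨{0, 1, 2}, {0, 2, 3}, {0, 1, 4}, {3, 4, 5}, {0, 1, 3}, ?_, ?_, ?_, ?_, ?_, ?_, ?_, ?_⟩
      <;> decide
  have h13 : BergeDiamond hubSix 1 3 0 2 := by
    refine ⟨{0, 1, 4}, {0, 1, 2}, {0, 1, 3}, {0, 2, 3}, {0, 2, 5}, ?_, ?_, ?_, ?_, ?_, ?_, ?_, ?_⟩
      <;> decide
  have h15 : BergeDiamond hubSix 1 5 0 3 := by
    refine ⟨{0, 1, 2}, {0, 1, 3}, {0, 2, 5}, {3, 4, 5}, {0, 2, 3}, ?_, ?_, ?_, ?_, ?_, ?_, ?_, ?_⟩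
      <;> decide
  have h23 : BergeDiamond hubSix 2 3 0 1 := by
    refine ⟨{0, 2, 5}, {0, 1, 2}, {0, 2, 3}, {0, 1, 3}, {0, 1, 4}, ?_, ?_, ?_, ?_, ?_, ?_, ?_, ?_⟩
      <;> decide
  have h24 : BergeDiamond hubSix 2 4 0 3 := by
    refine ⟨{0, 1, 2}, {0, 2, 3}, {0, 1, 4}, {3, 4, 5}, {0, 1, 3}, ?_, ?_, ?_, ?_, ?_, ?_, ?_, ?_⟩
      <;> decide
  refine ⟨by unfold Is3Uniform; decide, fun e _ => Finset.subset_univ e, not_isBergeK4_hubSix,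
    fun e _ h3 he => ?_, h03.goodPair, by unfold HasBergeTriangle; decide⟩
  have hpair : ∀ e : Finset (Fin 6), e.card = 3 → e ∉ hubSix →
      0 ∈ e ∧ 3 ∈ e ∨ 0 ∈ e ∧ 4 ∈ e ∨ 1 ∈ e ∧ 3 ∈ e ∨ 1 ∈ e ∧ 5 ∈ e ∨ 2 ∈ e ∧ 3 ∈ e ∨
        2 ∈ e ∧ 4 ∈ e := by decide
  obtain ⟨hp, hq⟩ | ⟨hp, hq⟩ | ⟨hp, hq⟩ | ⟨hp, hq⟩ | ⟨hp, hq⟩ | ⟨hp, hq⟩ := hpair e h3 he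
  exacts [⟨_, hp, _, hq, h03.goodPair⟩, ⟨_, hp, _, hq, h04.goodPair⟩,
    ⟨_, hp, _, hq, h13.goodPair⟩, ⟨_, hp, _, hq, h15.goodPair⟩, ⟨_, hp, _, hq, h23.goodPair⟩,
    ⟨_, hp, _, hq, h24.goodPair⟩]

theorem IsHubSaturatedOn.exists_of_card_eq {α β : Type*} [Fintype α] {E : Finset (Finset α)}
    {x y : α} (hE : IsHubSaturatedOn E Finset.univ x y) {S : Finset β}
    (hS : Fintype.card α = S.card) :
    ∃ (F : Finset (Finset β)) (x y : β), IsHubSaturatedOn F S x y ∧ F.card ≤ E.card := by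
  classical
  let φ : α ↪ β := (Fintype.equivOfCardEq (by simpa using hS)).toEmbedding.trans
    (Function.Embedding.subtype (· ∈ S))
  have hφ : Finset.univ.map φ = S := by
    rw [← Finset.map_map, Finset.map_univ_equiv, Finset.univ_eq_attach, Finset.attach_map_val]
  exact ⟨_, _, _, hφ ▸ hE.map φ, Finset.card_image_le⟩

theorem exists_isHubSaturatedOn {α : Type*} (S : Finset α) (hS : 5 ≤ S.card) :
    ∃ (E : Finset (Finset α)) (x y : α), IsHubSaturatedOn E S x y ∧ E.card ≤ S.card := by
  classical
  induction h : S.card using Nat.strong_induction_on generalizing S with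
  | _ n ih =>
    obtain rfl | rfl | hn : n = 5 ∨ n = 6 ∨ 7 ≤ n := by omega
    · exact isHubSaturatedOn_hubFive.exists_of_card_eq (by simp [h])
    · exact isHubSaturatedOn_hubSix.exists_of_card_eq (by simp [h])
    · obtain ⟨p, hp, q, hq, hpq⟩ := Finset.one_lt_card.1 (by omega : 1 < S.card)
      have hq' : q ∈ S.erase p := Finset.mem_erase.2 ⟨hpq.symm, hq⟩
      set T := (S.erase p).erase q
      have hT : T.card + 2 = n := by
        rw [← h, ← Finset.card_erase_add_one hp, ← Finset.card_erase_add_one hq']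
      obtain ⟨E, x, y, hE, hcard⟩ := ih T.card (by omega) T (by omega) rfl
      have hS_eq : insert p (insert q T) = S := by
        rw [Finset.insert_erase hq', Finset.insert_erase hp]
      have hE' := hE.extend (by simp [T]) (by simp [T]) hpq
      rw [hS_eq] at hE'
      exact ⟨_, x, y, hE', card_hubExtension_le.trans (by omega)⟩

theorem exists_isSaturated_card_le [Fintype V] (hV : 5 ≤ Fintype.card V) :
    ∃ E : Finset (Finset V), IsSaturated E ∧ E.card ≤ Fintype.card V :=
  let ⟨E, _, _, hE, hcard⟩ := exists_isHubSaturatedOn Finset.univ hV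
  ⟨E, hE.isSaturated, hcard⟩

end Existence

section Isolated

variable [Fintype V] {E : Finset (Finset V)} {v : V}

theorem IsSaturated.goodPair_of_forall_notMem (hE : IsSaturated E) (hv : ∀ e ∈ E, v ∉ e) {p q : V}
    (hp : p ≠ v) (hq : q ≠ v) (hpq : p ≠ q) : GoodPair E p q := by
  obtain ⟨-, hfree, hsat⟩ := hE
  have hcard : ({v, p, q} : Finset V).card = 3 :=
    Finset.card_eq_three.2 ⟨v, p, q, hp.symm, hq.symm, hpq, rfl⟩
  obtain ⟨r, hr, s, hs, h⟩ := exists_goodPair_of_isBergeK4_insert hfree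
    (hsat {v, p, q} hcard fun h => hv _ h (by simp))
  obtain ⟨x, y, ⟨D⟩⟩ := h.exists_bergeDiamond
  have hrv : r ≠ v := fun h => hv _ D.px_mem (h ▸ D.mem_px.1)
  have hsv : s ≠ v := fun h => hv _ D.qx_mem (h ▸ D.mem_qx.1)
  have hrs : r ≠ s := by grind [D.core_nodup]
  obtain ⟨rfl, rfl⟩ | ⟨rfl, rfl⟩ : r = p ∧ s = q ∨ r = q ∧ s = p := by grind
  exacts [h, h.symm]

theorem IsSaturated.card_lt_card_of_forall_notMem (hV : 7 ≤ Fintype.card V) (hE : IsSaturated E)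
    (hv : ∀ e ∈ E, v ∉ e) : Fintype.card V < E.card := by
  have hcard : (Finset.univ.erase v).card = Fintype.card V - 1 :=
    Finset.card_erase_of_mem (Finset.mem_univ v)
  have hle := card_add_two_le_of_forall_goodPair (E := E) (U := Finset.univ.erase v) (by omega)
    hE.1 hE.2.1 (fun e he => Finset.subset_erase.2 ⟨Finset.subset_univ e, hv e he⟩)
    fun p hp q hq => hE.goodPair_of_forall_notMem hv (Finset.ne_of_mem_erase hp)
      (Finset.ne_of_mem_erase hq)
  omega

end Isolated

theorem stmt_11_general [Fintype V] (hV : 7 ≤ Fintype.card V) {E : Finset (Finset V)}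
    (hE : IsSaturated E) (hcard : E.card ≤ Fintype.card V) (v : V) : 1 ≤ hdeg E v := by
  rw [Nat.one_le_iff_ne_zero, hdeg, Finset.card_ne_zero]
  by_contra h
  refine hcard.not_gt (hE.card_lt_card_of_forall_notMem (v := v) hV fun e he hve => ?_)
  exact h ⟨e, Finset.mem_filter.2 ⟨he, hve⟩⟩

theorem stmt_11 (n : ℕ) (hn : 7 ≤ n) (E : Finset (Finset (Fin n)))
    (hsat : IsSaturated E)
    (hmin : ∀ E' : Finset (Finset (Fin n)), IsSaturated E' → E.card ≤ E'.card) :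
    ∀ v : Fin n, 1 ≤ hdeg E v := by
  obtain ⟨E', hE', hcard⟩ := exists_isSaturated_card_le (V := Fin n) (by simp; omega)
  exact stmt_11_general (by simpa using hn) hsat ((hmin E' hE').trans hcard)
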